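/- Let T be a finite tree rooted at r and let p ≥ 2·h(T). There exists an optimal solution 𝓘 of the Min-Immersions problem (a feasible covering minimizing the number of immersions |𝓘|) such that every leaf of every immersion I ∈ 𝓘 is a leaf of T. -/

import Mathlib

/-!
Every vertex has depth at most `p / 2`, so the shortest paths from the root form a feasible
covering. Among all feasible coverings take one that lexicographically minimizes the number of
immersions and then the total cost, and suppose that one of its immersions `I` has a leaf `v`
that is not a leaf of the tree. Some tree edge `vw` is then missing from `I`. If `J` is an
immersion of the covering that reaches `w`, then `I ⊔ J` is connected, hence induced because the
tree has no cycles, so it contains `vw`; therefore `J` does. Thus `J ≠ I` also covers `v`, and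
deleting `v` from `I` yields a cheaper covering with no more immersions, a contradiction.
-/

open SimpleGraph Finset

/-- Cost of a subgraph-immersion: twice the number of its edges. -/
noncomputable def immCost {V : Type*} {G : SimpleGraph V} (I : G.Subgraph) : ℕ :=
  2 * I.edgeSet.ncard

/-- An immersion is a connected subgraph of `G` containing the root `r`. -/
def IsImmersion {V : Type*} {G : SimpleGraph V} (r : V) (I : G.Subgraph) : Prop :=
  I.Connected ∧ r ∈ I.verts

/-- Height of the rooted tree: maximum distance from the root. -/
noncomputable def treeHeight {V : Type*} [Fintype V] (G : SimpleGraph V) (r : V) : ℕ :=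
  Finset.univ.sup (fun v => G.dist r v)

/-- A leaf of the rooted tree: a vertex `v ≠ r` of degree 1. -/
def IsTreeLeaf {V : Type*} (G : SimpleGraph V) (r v : V) : Prop :=
  v ≠ r ∧ (G.neighborSet v).ncard = 1

/-- A leaf of an immersion `I`: a vertex `v ≠ r` of degree 1 in `I`. -/
def IsImmLeaf {V : Type*} {G : SimpleGraph V} (r : V) (I : G.Subgraph) (v : V) : Prop :=
  v ≠ r ∧ (I.neighborSet v).ncard = 1

/-- A feasible covering: a finite set of immersions, each of cost at most `p`,
whose vertex sets cover all vertices. -/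
def IsFeasible {V : Type*} [Fintype V] {G : SimpleGraph V} (r : V) (p : ℕ)
    (𝓘 : Finset G.Subgraph) : Prop :=
  (∀ I ∈ 𝓘, IsImmersion r I ∧ immCost I ≤ p) ∧ (∀ v : V, ∃ I ∈ 𝓘, v ∈ I.verts)

/-- Total cost of a set of immersions. -/
noncomputable def totalCost {V : Type*} {G : SimpleGraph V} (𝓘 : Finset G.Subgraph) : ℕ :=
  ∑ I ∈ 𝓘, immCost I

/-- Optimality for the Min-Distance problem. -/
def MinDistOptimal {V : Type*} [Fintype V] {G : SimpleGraph V} (r : V) (p : ℕ)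
    (𝓘 : Finset G.Subgraph) : Prop :=
  IsFeasible r p 𝓘 ∧ ∀ 𝓙 : Finset G.Subgraph, IsFeasible r p 𝓙 → totalCost 𝓘 ≤ totalCost 𝓙

/-- Makespan (maximum collective time) of an assignment `a` of immersions to `k` robots. -/
noncomputable def makespan {V : Type*} {G : SimpleGraph V} (k : ℕ)
    (𝓘 : Finset G.Subgraph) (a : G.Subgraph → Fin k) : ℕ :=
  Finset.univ.sup (fun i : Fin k => ∑ I ∈ 𝓘.filter (fun I => a I = i), immCost I)

/-- Optimality for the Min-Time problem with `k` robots. -/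
def MinTimeOptimal {V : Type*} [Fintype V] {G : SimpleGraph V} (r : V) (p k : ℕ)
    (𝓘 : Finset G.Subgraph) (a : G.Subgraph → Fin k) : Prop :=
  IsFeasible r p 𝓘 ∧ ∀ (𝓙 : Finset G.Subgraph) (b : G.Subgraph → Fin k),
    IsFeasible r p 𝓙 → makespan k 𝓘 a ≤ makespan k 𝓙 b

/-- Optimality for the Min-Immersions problem. -/
def MinImmOptimal {V : Type*} [Fintype V] {G : SimpleGraph V} (r : V) (p : ℕ)
    (𝓘 : Finset G.Subgraph) : Prop :=
  IsFeasible r p 𝓘 ∧ ∀ 𝓙 : Finset G.Subgraph, IsFeasible r p 𝓙 → 𝓘.card ≤ 𝓙.card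

section Subgraph

variable {V : Type*} {G : SimpleGraph V} {H K : G.Subgraph} {s : Set V} {v w : V}

theorem isInduced_of_preconnected (hG : G.IsAcyclic) (hH : H.Preconnected) : H.IsInduced := by
  intro v hv w hw hvw
  obtain ⟨q, hqH⟩ := H.preconnected_iff_forall_exists_walk_subgraph.1 hH hv hw
  have hbridge : G.IsBridge s(v, w) := isAcyclic_iff_forall_adj_isBridge.1 hG hvw
  have hmem : s(v, w) ∈ q.edges := isBridge_iff_forall_walk_mem_edges.1 hbridge q
  exact hqH.2 (Walk.adj_toSubgraph_iff_mem_edges.2 hmem)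

theorem adj_or_adj_of_preconnected (hG : G.IsAcyclic) (hH : H.Preconnected)
    (hK : K.Preconnected) (hHK : (H ⊓ K).verts.Nonempty) (hv : v ∈ H.verts) (hw : w ∈ K.verts)
    (hvw : G.Adj v w) : H.Adj v w ∨ K.Adj v w :=
  isInduced_of_preconnected hG (Subgraph.connected_sup hH hK hHK).preconnected
    (.inl hv) (.inr hw) hvw

theorem preconnected_deleteVerts (hH : H.Preconnected)
    (hs : ∀ v ∈ s, (H.neighborSet v).Subsingleton) : (H.deleteVerts s).Preconnected := by
  have hinduce : (H.coe.induce {x | x.1 ∉ s}).Preconnected :=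
    hH.coe.induce_of_degree_eq_one fun x hx y hy z hz =>
      Subtype.ext (hs x (not_not.1 hx) hy hz)
  let f : H.coe.induce {x | x.1 ∉ s} →g (H.deleteVerts s).coe :=
    { toFun := fun x => ⟨x.1.1, x.1.2, x.2⟩
      map_rel' := fun {x y} hxy => Subgraph.deleteVerts_adj.2 ⟨x.1.2, x.2, y.1.2, y.2, hxy⟩ }
  exact ⟨fun x y => (hinduce ⟨⟨x, x.2.1⟩, x.2.2⟩ ⟨⟨y, y.2.1⟩, y.2.2⟩).map f⟩

theorem immCost_deleteVerts_lt (hH : H.edgeSet.Finite) (hv : v ∈ s) (hvw : H.Adj v w) :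
    immCost (H.deleteVerts s) < immCost H := by
  have hssub : (H.deleteVerts s).edgeSet ⊂ H.edgeSet := by
    refine ⟨Subgraph.edgeSet_mono Subgraph.deleteVerts_le, fun hsub => ?_⟩
    have hadj : (H.deleteVerts s).Adj v w := hsub (Subgraph.mem_edgeSet.2 hvw)
    exact (Subgraph.deleteVerts_adj.1 hadj).2.1 hv
  exact Nat.mul_lt_mul_of_pos_left (Set.ncard_lt_ncard hssub hH) two_pos

theorem immCost_toSubgraph_le (q : G.Walk v w) : immCost q.toSubgraph ≤ 2 * q.length := by
  classical
  have hedges : q.toSubgraph.edgeSet = q.edges.toFinset := by ext; simp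
  rw [immCost, hedges, Set.ncard_coe_finset, ← q.length_edges]
  gcongr
  exact q.edges.toFinset_card_le

end Subgraph

section Immersion

variable {V : Type*} {G : SimpleGraph V} {r v : V} {I : G.Subgraph}

theorem isImmersion_toSubgraph (q : G.Walk r v) : IsImmersion r q.toSubgraph :=
  ⟨q.toSubgraph_connected, q.start_mem_verts_toSubgraph⟩

theorem IsImmLeaf.exists_adj (hv : IsImmLeaf r I v) : ∃ u, I.Adj v u :=
  Set.nonempty_of_ncard_ne_zero (hv.2.trans_ne one_ne_zero)

theorem IsImmLeaf.exists_adj_not_adj (hv : IsImmLeaf r I v) (hvG : ¬ IsTreeLeaf G r v) :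
    ∃ w, G.Adj v w ∧ ¬ I.Adj v w := by
  by_contra! hadj
  have hnbr : G.neighborSet v = I.neighborSet v :=
    Set.Subset.antisymm hadj (I.neighborSet_subset v)
  exact hvG ⟨hv.1, hnbr ▸ hv.2⟩

theorem IsImmersion.deleteVerts_leaf (hI : IsImmersion r I) (hv : IsImmLeaf r I v) :
    IsImmersion r (I.deleteVerts {v}) := by
  have hr : r ∈ (I.deleteVerts {v}).verts := ⟨hI.2, hv.1.symm⟩
  have hsub : ∀ u ∈ ({v} : Set V), (I.neighborSet u).Subsingleton := by
    rintro u rfl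
    obtain ⟨w, hw⟩ := Set.ncard_eq_one.1 hv.2
    exact hw ▸ Set.subsingleton_singleton
  exact ⟨Subgraph.connected_iff.2
    ⟨preconnected_deleteVerts hI.1.preconnected hsub, r, hr⟩, hr⟩

end Immersion

section Covering

variable {V : Type*} {G : SimpleGraph V} {r v : V} {p : ℕ} {I K : G.Subgraph}
  {𝓘 : Finset G.Subgraph}

theorem totalCost_insert_le [DecidableEq G.Subgraph] (K : G.Subgraph) (𝓘 : Finset G.Subgraph) :
    totalCost (insert K 𝓘) ≤ immCost K + totalCost 𝓘 := by
  by_cases hK : K ∈ 𝓘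
  · rw [insert_eq_of_mem hK]
    exact Nat.le_add_left _ _
  · exact (sum_insert hK).le

theorem totalCost_insert_erase_lt [DecidableEq G.Subgraph] (hI : I ∈ 𝓘)
    (hKI : immCost K < immCost I) : totalCost (insert K (𝓘.erase I)) < totalCost 𝓘 :=
  calc totalCost (insert K (𝓘.erase I)) ≤ immCost K + totalCost (𝓘.erase I) :=
        totalCost_insert_le _ _
    _ < immCost I + totalCost (𝓘.erase I) := by gcongr
    _ = totalCost 𝓘 := add_sum_erase 𝓘 immCost hI

variable [Fintype V]

theorem exists_isFeasible (hG : G.Connected) (hp : 2 * treeHeight G r ≤ p) :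
    ∃ 𝓘 : Finset G.Subgraph, IsFeasible r p 𝓘 := by
  classical
  choose q hq using hG.exists_walk_length_eq_dist r
  have hcost (v : V) : immCost (q v).toSubgraph ≤ p :=
    calc immCost (q v).toSubgraph ≤ 2 * (q v).length := immCost_toSubgraph_le _
      _ = 2 * G.dist r v := by rw [hq]
      _ ≤ 2 * treeHeight G r := by
        gcongr
        exact le_sup (f := G.dist r) (mem_univ v)
      _ ≤ p := hp
  exact ⟨univ.image fun v => (q v).toSubgraph,
    forall_mem_image.2 fun v _ => ⟨isImmersion_toSubgraph (q v), hcost v⟩,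
    fun v => ⟨_, mem_image_of_mem _ (mem_univ v), (q v).end_mem_verts_toSubgraph⟩⟩

theorem IsFeasible.insert_erase [DecidableEq G.Subgraph] (h𝓘 : IsFeasible r p 𝓘)
    (hK : IsImmersion r K) (hKp : immCost K ≤ p)
    (hcover : ∀ v ∈ I.verts, v ∉ K.verts → ∃ J ∈ 𝓘, J ≠ I ∧ v ∈ J.verts) :
    IsFeasible r p (insert K (𝓘.erase I)) := by
  refine ⟨(forall_mem_insert _ _ _).2
    ⟨⟨hK, hKp⟩, fun J hJ => h𝓘.1 J (mem_of_mem_erase hJ)⟩, fun v => ?_⟩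
  by_cases hvK : v ∈ K.verts
  · exact ⟨K, mem_insert_self _ _, hvK⟩
  obtain ⟨J, hJ, hJI, hvJ⟩ : ∃ J ∈ 𝓘, J ≠ I ∧ v ∈ J.verts := by
    obtain ⟨J, hJ, hvJ⟩ := h𝓘.2 v
    by_cases hJI : J = I
    · exact hcover v (hJI ▸ hvJ) hvK
    · exact ⟨J, hJ, hJI, hvJ⟩
  exact ⟨J, mem_insert_of_mem (mem_erase.2 ⟨hJI, hJ⟩), hvJ⟩

theorem IsFeasible.exists_ne_mem_verts_of_leaf (hG : G.IsAcyclic) (h𝓘 : IsFeasible r p 𝓘)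
    (hI : I ∈ 𝓘) (hv : IsImmLeaf r I v) (hvG : ¬ IsTreeLeaf G r v) :
    ∃ J ∈ 𝓘, J ≠ I ∧ v ∈ J.verts := by
  obtain ⟨u, hvu⟩ := hv.exists_adj
  obtain ⟨w, hvw, hIvw⟩ := hv.exists_adj_not_adj hvG
  obtain ⟨J, hJ, hwJ⟩ := h𝓘.2 w
  obtain ⟨hIconn, hrI⟩ := (h𝓘.1 I hI).1
  obtain ⟨hJconn, hrJ⟩ := (h𝓘.1 J hJ).1
  have hJvw : J.Adj v w := (adj_or_adj_of_preconnected hG hIconn.preconnected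
    hJconn.preconnected ⟨r, hrI, hrJ⟩ hvu.fst_mem hwJ hvw).resolve_left hIvw
  exact ⟨J, hJ, fun hJI => hIvw (hJI ▸ hJvw), hJvw.fst_mem⟩

theorem IsFeasible.exists_card_le_totalCost_lt (hG : G.IsAcyclic) (h𝓘 : IsFeasible r p 𝓘)
    (hI : I ∈ 𝓘) (hv : IsImmLeaf r I v) (hvG : ¬ IsTreeLeaf G r v) :
    ∃ 𝓙 : Finset G.Subgraph, IsFeasible r p 𝓙 ∧ 𝓙.card ≤ 𝓘.card ∧ totalCost 𝓙 < totalCost 𝓘 := by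
  classical
  obtain ⟨hIimm, hIp⟩ := h𝓘.1 I hI
  obtain ⟨u, hvu⟩ := hv.exists_adj
  have hcost : immCost (I.deleteVerts {v}) < immCost I :=
    immCost_deleteVerts_lt (Set.toFinite _) rfl hvu
  have hcover : ∀ x ∈ I.verts, x ∉ (I.deleteVerts {v}).verts →
      ∃ J ∈ 𝓘, J ≠ I ∧ x ∈ J.verts := by
    intro x hxI hx
    obtain rfl : x = v := of_not_not fun hxv => hx ⟨hxI, hxv⟩
    exact h𝓘.exists_ne_mem_verts_of_leaf hG hI hv hvG
  refine ⟨insert (I.deleteVerts {v}) (𝓘.erase I),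
    h𝓘.insert_erase (hIimm.deleteVerts_leaf hv) (hcost.le.trans hIp) hcover, ?_,
    totalCost_insert_erase_lt hI hcost⟩
  exact (card_insert_le _ _).trans (card_erase_add_one hI).le

end Covering

theorem stmt_2 {V : Type*} [Fintype V] (T : SimpleGraph V) (r : V) (p : ℕ)
    (hT : T.IsTree) (hp : 2 * treeHeight T r ≤ p) :
    ∃ 𝓘 : Finset T.Subgraph, MinImmOptimal r p 𝓘 ∧
      ∀ I ∈ 𝓘, ∀ v : V, IsImmLeaf r I v → IsTreeLeaf T r v := by
  obtain ⟨𝓘, hmin⟩ := exists_minimalFor_of_wellFoundedLT (IsFeasible r p)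
    (fun 𝓘 : Finset T.Subgraph => toLex (𝓘.card, totalCost 𝓘)) (exists_isFeasible hT.connected hp)
  have hopt : MinImmOptimal r p 𝓘 :=
    ⟨hmin.prop, fun 𝓙 h𝓙 => Prod.Lex.monotone_fst _ _ (hmin.le h𝓙)⟩
  refine ⟨𝓘, hopt, fun I hI v hv => by_contra fun hvT => ?_⟩
  obtain ⟨𝓙, h𝓙, hcard, hcost⟩ :=
    hmin.prop.exists_card_le_totalCost_lt hT.isAcyclic hI hv hvT
  exact hmin.not_lt h𝓙 (Prod.Lex.toLex_lt_toLex'.2 ⟨hcard, fun _ => hcost⟩)
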